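/- Nonemptiness characterization for NFH_∃: an NFH_∃ 𝓐 with k variables has a nonempty hyperlanguage, 𝓛(𝓐) ≠ ∅, if and only if there exist words u₁,…,uₖ over Σ such that zip(u₁,…,uₖ) is accepted by the underlying NFA Â (equivalently, iff Â accepts some legal word). -/

import Mathlib

/-- The length of the longest word in a `k`-tuple of words. -/
def maxLen {α : Type} {k : ℕ} (v : Fin k → List α) : ℕ :=
  Finset.univ.sup fun i => (v i).length

/-- `zip` of a `k`-tuple of words over `α`: the word over `k`-tuples of
`Option α`, where `none` plays the role of the padding symbol `#`. Its length
is the length of the longest word, and its `j`-th letter has `i`-th component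
the `j`-th letter of the `i`-th word (or `#` = `none` if that word has ended). -/
def zipWord {α : Type} {k : ℕ} (v : Fin k → List α) : List (Fin k → Option α) :=
  (List.range (maxLen v)).map fun j i => (v i)[j]?

/-- A nondeterministic finite hyperautomaton (NFH) with `k` word variables:
an NFA over the alphabet of `k`-tuples `(Σ ∪ {#})ᵏ` together with a
quantification condition, where the `i`-th quantifier binds the `i`-th
variable (`true` = ∃, `false` = ∀). -/
structure NFH (α σ : Type) (k : ℕ) where
  quant : Fin k → Bool
  aut : NFA (Fin k → Option α) σ

/-- Satisfaction of the suffix `𝔔ᵢ₊₁xᵢ₊₁ ⋯ 𝔔ₖxₖ` of the quantification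
condition by a hyperword `S`, given a partial assignment `v` to the first `i`
variables: when all variables are assigned, the underlying NFA must accept the
zip of the assignment. -/
def NFH.SatFrom {α σ : Type} {k : ℕ} (A : NFH α σ k) (S : Set (List α)) :
    ℕ → (Fin k → List α) → Prop
  | i, v =>
    if h : i < k then
      if A.quant ⟨i, h⟩ then
        ∃ w ∈ S, A.SatFrom S (i + 1) (Function.update v ⟨i, h⟩ w)
      else
        ∀ w ∈ S, A.SatFrom S (i + 1) (Function.update v ⟨i, h⟩ w)
    else
      zipWord v ∈ A.aut.accepts
  termination_by i _ => k - i
  decreasing_by all_goals omega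

/-- A hyperword `S` is accepted by the NFH `A` if it satisfies the full
quantification condition of `A`. -/
def NFH.Accepts {α σ : Type} {k : ℕ} (A : NFH α σ k) (S : Set (List α)) : Prop :=
  A.SatFrom S 0 fun _ => []

/-- The hyperlanguage of an NFH: the set of all nonempty hyperwords it accepts. -/
def NFH.hyperLang {α σ : Type} {k : ℕ} (A : NFH α σ k) : Set (Set (List α)) :=
  { S | S.Nonempty ∧ A.Accepts S }

/-!
An NFH_∃ accepts `S` exactly when some tuple of words of `S` has its zip accepted by the underlying
NFA. Enlarging `S` therefore preserves acceptance, so the hyperlanguage is nonempty iff it contains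
the hyperword of all words.
-/

theorem forall_le_eq_update_iff {ι β : Type*} [PartialOrder ι] [DecidableEq ι] {u v : ι → β}
    {a : ι} {b : β} :
    (∀ j ≤ a, u j = Function.update v a b j) ↔ u a = b ∧ ∀ j < a, u j = v j := by
  simp only [le_iff_eq_or_lt, or_imp, forall_and, forall_eq, Function.update_self]
  exact and_congr_right fun _ => forall₂_congr fun j hj => by rw [Function.update_of_ne hj.ne]

namespace NFH

variable {α σ : Type} {k : ℕ} {A : NFH α σ k} {S : Set (List α)} {i : ℕ} {v : Fin k → List α}

theorem satFrom_iff_zipWord_mem_accepts (hi : k ≤ i) :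
    A.SatFrom S i v ↔ zipWord v ∈ A.aut.accepts := by
  rw [SatFrom, dif_neg hi.not_gt]

theorem satFrom_iff_exists_update (hi : i < k) (hq : A.quant ⟨i, hi⟩ = true) :
    A.SatFrom S i v ↔ ∃ w ∈ S, A.SatFrom S (i + 1) (Function.update v ⟨i, hi⟩ w) := by
  rw [SatFrom, dif_pos hi, if_pos hq]

theorem satFrom_iff_exists_extension (hq : ∀ j : Fin k, i ≤ j → A.quant j = true) :
    A.SatFrom S i v ↔ ∃ u : Fin k → List α, (∀ j : Fin k, j < i → u j = v j) ∧
      (∀ j : Fin k, i ≤ j → u j ∈ S) ∧ zipWord u ∈ A.aut.accepts := by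
  induction hn : k - i generalizing i v with
  | zero =>
    have hi : k ≤ i := Nat.sub_eq_zero_iff_le.mp hn
    rw [satFrom_iff_zipWord_mem_accepts hi]
    constructor
    · exact fun hv => ⟨v, fun _ _ => rfl, fun j hj => absurd j.isLt (by omega), hv⟩
    · rintro ⟨u, huv, -, hu⟩
      obtain rfl : u = v := funext fun j => huv j (j.isLt.trans_le hi)
      exact hu
  | succ n ih =>
    have hi : i < k := by omega
    have agree_succ (u : Fin k → List α) (w : List α) :
        (∀ j : Fin k, j < i + 1 → u j = Function.update v ⟨i, hi⟩ w j) ↔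
          u ⟨i, hi⟩ = w ∧ ∀ j : Fin k, j < i → u j = v j := by
      simpa only [Fin.le_def, Fin.lt_def, Nat.lt_succ_iff] using
        forall_le_eq_update_iff (a := (⟨i, hi⟩ : Fin k))
    have mem_succ (u : Fin k → List α) :
        (∀ j : Fin k, i ≤ j → u j ∈ S) ↔
          u ⟨i, hi⟩ ∈ S ∧ ∀ j : Fin k, i + 1 ≤ j → u j ∈ S := by
      have le_iff (j : Fin k) : i ≤ j ↔ j = ⟨i, hi⟩ ∨ i + 1 ≤ j := by
        simp only [Fin.ext_iff]
        omega
      simp only [le_iff, or_imp, forall_and, forall_eq]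
    have ih_update (w : List α) := ih (v := Function.update v ⟨i, hi⟩ w)
      (fun j hj => hq j (Nat.le_of_succ_le hj)) (by omega)
    simp only [satFrom_iff_exists_update hi (hq _ le_rfl), ih_update, agree_succ, mem_succ]
    constructor
    · rintro ⟨w, hw, u, ⟨rfl, huv⟩, huS, hu⟩
      exact ⟨u, huv, ⟨hw, huS⟩, hu⟩
    · rintro ⟨u, huv, ⟨hw, huS⟩, hu⟩
      exact ⟨u ⟨i, hi⟩, hw, u, ⟨rfl, huv⟩, huS, hu⟩

theorem accepts_iff_exists_zipWord_mem_accepts (hq : ∀ j : Fin k, A.quant j = true) :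
    A.Accepts S ↔ ∃ u : Fin k → List α, (∀ j, u j ∈ S) ∧ zipWord u ∈ A.aut.accepts := by
  simp [Accepts, satFrom_iff_exists_extension fun j _ => hq j]

end NFH

/-- **Nonemptiness characterization for NFH_∃.** An NFH all of whose
quantifiers are ∃ has a nonempty hyperlanguage iff its underlying NFA accepts
some legal word `zip(u₁, …, uₖ)`. -/
theorem nfhE_nonemptiness {α σ : Type} {k : ℕ} (A : NFH α σ k)
    (hq : ∀ i : Fin k, A.quant i = true) :
    A.hyperLang.Nonempty ↔ ∃ v : Fin k → List α, zipWord v ∈ A.aut.accepts := by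
  constructor
  · rintro ⟨S, -, hS⟩
    obtain ⟨u, -, hu⟩ := (NFH.accepts_iff_exists_zipWord_mem_accepts hq).mp hS
    exact ⟨u, hu⟩
  · rintro ⟨u, hu⟩
    exact ⟨Set.univ, Set.univ_nonempty,
      (NFH.accepts_iff_exists_zipWord_mem_accepts hq).mpr ⟨u, fun _ => Set.mem_univ _, hu⟩⟩
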